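/- For φ ∈ BMO(ℝ^n), the condition φ ∈ VMO(ℝ^n) is equivalent to lim_{t→0} ‖φ - φ(·,t)‖_* = 0, where φ(x,t) = (P_t * φ)(x) is the Poisson extension of φ. -/

import Mathlib

open MeasureTheory Real Set Filter

/-- Open axis-parallel cube with corner `c` and side length `l`. -/
def cube {n : ℕ} (c : EuclideanSpace ℝ (Fin n)) (l : ℝ) : Set (EuclideanSpace ℝ (Fin n)) :=
  {x | ∀ i, x i ∈ Set.Ioo (c i) (c i + l)}

/-- Mean of `f` over the cube with corner `c` and side length `l`. -/
noncomputable def cubeAvg {n : ℕ} (f : EuclideanSpace ℝ (Fin n) → ℝ)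
    (c : EuclideanSpace ℝ (Fin n)) (l : ℝ) : ℝ :=
  (∫ x in cube c l, f x) / l ^ n

/-- Mean oscillation of `f` over the cube with corner `c` and side length `l`. -/
noncomputable def cubeOsc {n : ℕ} (f : EuclideanSpace ℝ (Fin n) → ℝ)
    (c : EuclideanSpace ℝ (Fin n)) (l : ℝ) : ℝ :=
  (∫ x in cube c l, |f x - cubeAvg f c l|) / l ^ n

/-- `f ∈ BMO(ℝⁿ)`. -/
def IsBMO {n : ℕ} (f : EuclideanSpace ℝ (Fin n) → ℝ) : Prop :=
  LocallyIntegrable f ∧ ∃ C, ∀ c l, 0 < l → cubeOsc f c l ≤ C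

/-- `f ∈ VMO(ℝⁿ)`. -/
def IsVMO {n : ℕ} (f : EuclideanSpace ℝ (Fin n) → ℝ) : Prop :=
  IsBMO f ∧ ∀ ε > (0 : ℝ), ∃ δ > (0 : ℝ), ∀ c l, 0 < l → l ≤ δ → cubeOsc f c l ≤ ε

/-- The `BMO` seminorm `‖f‖_*`. -/
noncomputable def bmoNorm {n : ℕ} (f : EuclideanSpace ℝ (Fin n) → ℝ) : ℝ :=
  sInf {C : ℝ | 0 ≤ C ∧ ∀ c l, 0 < l → cubeOsc f c l ≤ C}

/-- Poisson kernel of the upper half-space `ℝⁿ × (0,∞)`: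
`P_t(x) = c_n t / (t² + |x|²)^((n+1)/2)` with `c_n = Γ((n+1)/2)/π^((n+1)/2)`. -/
noncomputable def poissonHK (n : ℕ) (t : ℝ) (x : EuclideanSpace ℝ (Fin n)) : ℝ :=
  (Real.Gamma (((n : ℝ) + 1) / 2) / Real.pi ^ (((n : ℝ) + 1) / 2)) * t /
    (t ^ 2 + ‖x‖ ^ 2) ^ (((n : ℝ) + 1) / 2)

/-- Poisson extension `φ(x, t) = (P_t * φ)(x)`. -/
noncomputable def poissonExt {n : ℕ} (φ : EuclideanSpace ℝ (Fin n) → ℝ)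
    (x : EuclideanSpace ℝ (Fin n)) (t : ℝ) : ℝ :=
  ∫ y, poissonHK n t (x - y) * φ y

section helpers

open scoped ENNReal NNReal

variable {n : ℕ}

/-- The constant vector. -/
noncomputable def cv (n : ℕ) (a : ℝ) : EuclideanSpace ℝ (Fin n) := WithLp.toLp 2 (fun _ => a)

lemma cv_apply (a : ℝ) (i : Fin n) : cv n a i = a := rfl

lemma mem_cube (c x : EuclideanSpace ℝ (Fin n)) (l : ℝ) :
    x ∈ cube c l ↔ ∀ i, c i < x i ∧ x i < c i + l := Iff.rfl

lemma cube_eq (c : EuclideanSpace ℝ (Fin n)) (l : ℝ) :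
    cube c l = (MeasurableEquiv.toLp 2 (Fin n → ℝ)).symm ⁻¹'
      (Set.pi Set.univ fun i => Set.Ioo (c i) (c i + l)) := by
  ext x
  simp [cube]

lemma measurableSet_cube (c : EuclideanSpace ℝ (Fin n)) (l : ℝ) : MeasurableSet (cube c l) := by
  rw [cube_eq]
  exact (MeasurableEquiv.measurable _) (MeasurableSet.univ_pi fun i => measurableSet_Ioo)

lemma volume_cube (c : EuclideanSpace ℝ (Fin n)) {l : ℝ} (hl : 0 < l) :
    volume (cube c l) = ENNReal.ofReal (l ^ n) := by
  rw [cube_eq, (EuclideanSpace.volume_preserving_symm_measurableEquiv_toLp (Fin n)).measure_preimage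
    (MeasurableSet.univ_pi fun i => measurableSet_Ioo).nullMeasurableSet, Real.volume_pi_Ioo]
  simp [ENNReal.ofReal_pow hl.le]

lemma coord_le_norm (x : EuclideanSpace ℝ (Fin n)) (i : Fin n) : |x i| ≤ ‖x‖ := by
  simpa using PiLp.norm_apply_le x i

lemma norm_le_of_coord (x : EuclideanSpace ℝ (Fin n)) {a : ℝ} (ha : 0 ≤ a)
    (h : ∀ i, |x i| ≤ a) : ‖x‖ ≤ n * a := by
  have : x = ∑ i, EuclideanSpace.single i (x i) := by
    ext j; simp [Finset.sum_apply]
  rw [this]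
  refine (norm_sum_le _ _).trans ?_
  refine (Finset.sum_le_sum (g := fun _ => a) fun i _ => ?_).trans ?_
  · simpa using h i
  · simp

lemma bounded_cube (c : EuclideanSpace ℝ (Fin n)) {l : ℝ} (hl : 0 < l) :
    cube c l ⊆ Metric.closedBall c (n * l) := by
  intro x hx
  rw [Metric.mem_closedBall, dist_eq_norm]
  apply norm_le_of_coord _ hl.le
  intro i
  have := hx i
  simp only [Set.mem_Ioo] at this
  rw [PiLp.sub_apply, abs_le]; constructor <;> linarith

lemma intOn_cube {f : EuclideanSpace ℝ (Fin n) → ℝ} (hf : LocallyIntegrable f)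
    (c : EuclideanSpace ℝ (Fin n)) {l : ℝ} (hl : 0 < l) : IntegrableOn f (cube c l) :=
  (hf.integrableOn_isCompact (isCompact_closedBall c (n * l))).mono_set (bounded_cube c hl)

lemma cube_sub_preimage (c y : EuclideanSpace ℝ (Fin n)) (l : ℝ) (x : EuclideanSpace ℝ (Fin n)) :
    x - y ∈ cube (c - y) l ↔ x ∈ cube c l := by
  simp only [mem_cube, PiLp.sub_apply]
  refine forall_congr' fun i => ?_
  constructor <;> rintro ⟨h1, h2⟩ <;> constructor <;> linarith

lemma lintegral_cube_shift (g : EuclideanSpace ℝ (Fin n) → ℝ≥0∞)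
    (c y : EuclideanSpace ℝ (Fin n)) (l : ℝ) :
    ∫⁻ x in cube c l, g (x - y) = ∫⁻ x in cube (c - y) l, g x := by
  rw [← lintegral_indicator (measurableSet_cube _ _), ← lintegral_indicator (measurableSet_cube _ _),
    ← lintegral_sub_right_eq_self (Set.indicator (cube (c - y) l) _) y]
  congr 1; ext x
  by_cases hx : x ∈ cube c l
  · rw [Set.indicator_of_mem hx, Set.indicator_of_mem ((cube_sub_preimage c y l x).2 hx)]
  · rw [Set.indicator_of_notMem hx,
      Set.indicator_of_notMem (fun h => hx ((cube_sub_preimage c y l x).1 h))]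

lemma osc_lint {f : EuclideanSpace ℝ (Fin n) → ℝ} {c : EuclideanSpace ℝ (Fin n)} {l K : ℝ}
    (hl : 0 < l) (hf : IntegrableOn f (cube c l)) (h : cubeOsc f c l ≤ K) :
    ∫⁻ x in cube c l, ‖f x - cubeAvg f c l‖ₑ ≤ ENNReal.ofReal (K * l ^ n) := by
  have hc : IntegrableOn (fun _ : EuclideanSpace ℝ (Fin n) => cubeAvg f c l) (cube c l) := by
    refine integrableOn_const ?_ (by simp)
    rw [volume_cube c hl]; exact ENNReal.ofReal_ne_top
  have hi := (hf.sub hc)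
  have := ofReal_integral_norm_eq_lintegral_enorm hi
  simp only [Pi.sub_apply] at this
  rw [← this]
  apply ENNReal.ofReal_le_ofReal
  unfold cubeOsc at h
  rwa [div_le_iff₀ (by positivity)] at h

lemma avg_diff_lint {f : EuclideanSpace ℝ (Fin n) → ℝ} {c : EuclideanSpace ℝ (Fin n)} {l : ℝ}
    (hl : 0 < l) (hf : IntegrableOn f (cube c l)) (a : ℝ) :
    ‖cubeAvg f c l - a‖ₑ * ENNReal.ofReal (l ^ n) ≤ ∫⁻ x in cube c l, ‖f x - a‖ₑ := by
  have hv := volume_cube c hl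
  have hc : IntegrableOn (fun _ : EuclideanSpace ℝ (Fin n) => a) (cube c l) := by
    refine integrableOn_const ?_ (by simp)
    rw [hv]; exact ENNReal.ofReal_ne_top
  have hpos : 0 < l ^ n := by positivity
  have e : ∫ x in cube c l, (f x - a) = (cubeAvg f c l - a) * l ^ n := by
    rw [integral_sub hf hc, setIntegral_const, Measure.real, hv, ENNReal.toReal_ofReal hpos.le]
    unfold cubeAvg
    field_simp
    simp
  calc _ = ‖∫ x in cube c l, (f x - a)‖ₑ := by
        rw [e, enorm_mul, Real.enorm_of_nonneg hpos.le]
    _ ≤ _ := enorm_integral_le_lintegral_enorm _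

/-- double oscillation -/
noncomputable def dosc (f : EuclideanSpace ℝ (Fin n) → ℝ)
    (c : EuclideanSpace ℝ (Fin n)) (l : ℝ) : ℝ≥0∞ :=
  ∫⁻ x in cube c l, ∫⁻ z in cube c l, ‖f x - f z‖ₑ

lemma osc_le_of_dosc {f : EuclideanSpace ℝ (Fin n) → ℝ} (hm : Measurable f)
    {c : EuclideanSpace ℝ (Fin n)} {l K : ℝ} (hl : 0 < l) (hK : 0 ≤ K)
    (h : dosc f c l ≤ ENNReal.ofReal (K * l ^ n * l ^ n)) : cubeOsc f c l ≤ K := by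
  have hpos : 0 < l ^ n := by positivity
  have hv := volume_cube c hl
  have hc (a : ℝ) : IntegrableOn (fun _ : EuclideanSpace ℝ (Fin n) => a) (cube c l) := by
    refine integrableOn_const ?_ (by simp)
    rw [hv]; exact ENNReal.ofReal_ne_top
  by_cases hf : IntegrableOn f (cube c l)
  · have h1 : (∫⁻ x in cube c l, ‖f x - cubeAvg f c l‖ₑ) * ENNReal.ofReal (l ^ n)
        ≤ dosc f c l := by
      rw [← lintegral_mul_const _ (by fun_prop)]
      apply lintegral_mono
      intro x
      have := avg_diff_lint hl hf (f x)
      simp only [enorm_sub_rev (f _) (f x), enorm_sub_rev (cubeAvg _ _ _) (f x)] at this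
      exact this
    have hi := (hf.sub (hc (cubeAvg f c l)))
    have h2 := ofReal_integral_norm_eq_lintegral_enorm hi
    simp only [Pi.sub_apply, Real.norm_eq_abs] at h2
    rw [← h2, ← ENNReal.ofReal_mul (by positivity)] at h1
    have h3 := h1.trans h
    rw [ENNReal.ofReal_le_ofReal_iff (by positivity)] at h3
    unfold cubeOsc
    rw [div_le_iff₀ hpos]
    exact le_of_mul_le_mul_right h3 hpos
  · have : ¬ IntegrableOn (fun x => |f x - cubeAvg f c l|) (cube c l) := by
      intro hh
      apply hf
      have h4 : IntegrableOn (fun x => f x - cubeAvg f c l) (cube c l) := by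
        refine (integrable_norm_iff ?_).1 hh
        exact (hm.sub_const _).aestronglyMeasurable
      have := h4.add (hc (cubeAvg f c l))
      simpa [Pi.add_def] using this
    unfold cubeOsc
    rw [integral_undef this]
    simpa using hK

lemma dosc_le_lint {f : EuclideanSpace ℝ (Fin n) → ℝ} (hm : Measurable f)
    {c : EuclideanSpace ℝ (Fin n)} {l : ℝ} (hl : 0 < l) (a : ℝ) :
    dosc f c l ≤ 2 * ENNReal.ofReal (l ^ n) * ∫⁻ x in cube c l, ‖f x - a‖ₑ := by
  unfold dosc
  calc _ ≤ ∫⁻ x in cube c l, ∫⁻ z in cube c l, (‖f x - a‖ₑ + ‖f z - a‖ₑ) := by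
        gcongr with x z
        calc ‖f x - f z‖ₑ = ‖(f x - a) - (f z - a)‖ₑ := by congr 1; ring
          _ ≤ _ := enorm_sub_le
    _ = _ := by
      have : ∀ x, ∫⁻ z in cube c l, (‖f x - a‖ₑ + ‖f z - a‖ₑ) =
          ‖f x - a‖ₑ * ENNReal.ofReal (l ^ n) + ∫⁻ z in cube c l, ‖f z - a‖ₑ := by
        intro x
        rw [lintegral_add_left (by fun_prop), setLIntegral_const, volume_cube c hl]
      simp_rw [this]
      rw [lintegral_add_left (by fun_prop), lintegral_mul_const _ (by fun_prop), setLIntegral_const,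
        volume_cube c hl]
      ring

lemma dosc_le_of_osc {f : EuclideanSpace ℝ (Fin n) → ℝ} (hm : Measurable f)
    {c : EuclideanSpace ℝ (Fin n)} {l K : ℝ} (hl : 0 < l) (hf : IntegrableOn f (cube c l))
    (h : cubeOsc f c l ≤ K) :
    dosc f c l ≤ ENNReal.ofReal (2 * K * l ^ n * l ^ n) := by
  refine (dosc_le_lint hm hl (cubeAvg f c l)).trans ?_
  have hpos : 0 < l ^ n := by positivity
  calc _ ≤ 2 * ENNReal.ofReal (l ^ n) * ENNReal.ofReal (K * l ^ n) := by
        gcongr; exact osc_lint hl hf h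
    _ = _ := by
      rw [show (2 : ℝ≥0∞) = ENNReal.ofReal 2 by simp, ← ENNReal.ofReal_mul (by norm_num),
        ← ENNReal.ofReal_mul (by positivity)]
      congr 1; ring

lemma dosc_add {f g : EuclideanSpace ℝ (Fin n) → ℝ} (hf : Measurable f) (hg : Measurable g)
    (c : EuclideanSpace ℝ (Fin n)) (l : ℝ) :
    dosc (fun x => f x + g x) c l ≤ dosc f c l + dosc g c l := by
  unfold dosc
  rw [← lintegral_add_left (Measurable.lintegral_prod_right' (f := fun p : EuclideanSpace ℝ (Fin n) × EuclideanSpace ℝ (Fin n) => ‖f p.1 - f p.2‖ₑ)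
    (by fun_prop))]
  apply lintegral_mono
  intro x
  dsimp only
  rw [← lintegral_add_left (by fun_prop)]
  apply lintegral_mono
  intro z
  dsimp only
  calc ‖f x + g x - (f z + g z)‖ₑ = ‖(f x - f z) + (g x - g z)‖ₑ := by congr 1; ring
    _ ≤ _ := enorm_add_le _ _

lemma dosc_neg {f : EuclideanSpace ℝ (Fin n) → ℝ} (c : EuclideanSpace ℝ (Fin n)) (l : ℝ) :
    dosc (fun x => - f x) c l = dosc f c l := by
  unfold dosc
  simp_rw [neg_sub_neg, enorm_sub_rev]

/-- averaging over small cubes -/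
lemma lint_large_cube {g : EuclideanSpace ℝ (Fin n) → ℝ≥0∞} (hg : Measurable g) {h S : ℝ}
    (hh : 0 < h) (hS : ∀ c, ∫⁻ x in cube c h, g x ≤ ENNReal.ofReal (S * h ^ n))
    (c : EuclideanSpace ℝ (Fin n)) {l : ℝ} (hl : h ≤ l) :
    ∫⁻ x in cube c l, g x ≤ ENNReal.ofReal (2 ^ n * S * l ^ n) := by
  have hl0 : 0 < l := hh.trans_le hl
  have hpos : 0 < h ^ n := by positivity
  have key : (∫⁻ x in cube c l, g x) * ENNReal.ofReal (h ^ n) ≤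
      ENNReal.ofReal ((2 * l) ^ n) * ENNReal.ofReal (S * h ^ n) := by
    have hset : MeasurableSet {p : EuclideanSpace ℝ (Fin n) × EuclideanSpace ℝ (Fin n) | p.1 ∈ cube p.2 h} := by
      have : {p : EuclideanSpace ℝ (Fin n) × EuclideanSpace ℝ (Fin n) | p.1 ∈ cube p.2 h} =
        ⋂ i, {p : EuclideanSpace ℝ (Fin n) × EuclideanSpace ℝ (Fin n) | p.2 i < p.1 i ∧ p.1 i < p.2 i + h} := by
        ext p; simp [mem_cube]
      rw [this]
      refine MeasurableSet.iInter fun i => ?_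
      apply MeasurableSet.inter
      · exact measurableSet_lt (f := fun p : EuclideanSpace ℝ (Fin n) × EuclideanSpace ℝ (Fin n) => p.2 i)
          (g := fun p => p.1 i) (by fun_prop) (by fun_prop)
      · exact measurableSet_lt (f := fun p : EuclideanSpace ℝ (Fin n) × EuclideanSpace ℝ (Fin n) => p.1 i)
          (g := fun p => p.2 i + h) (by fun_prop) (by fun_prop)
    calc (∫⁻ x in cube c l, g x) * ENNReal.ofReal (h ^ n)
        = ∫⁻ x in cube c l, ∫⁻ z, (cube (x - cv n h) h).indicator (fun _ => g x) z := by
          rw [← lintegral_mul_const _ hg]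
          congr 1; ext x
          rw [lintegral_indicator (measurableSet_cube _ _), setLIntegral_const, volume_cube _ hh]
      _ ≤ ∫⁻ x in cube c l, ∫⁻ z in cube (c - cv n h) (2 * l),
            {p : EuclideanSpace ℝ (Fin n) × EuclideanSpace ℝ (Fin n) | p.1 ∈ cube p.2 h}.indicator (fun p => g p.1) (x, z) := by
          apply setLIntegral_mono' (measurableSet_cube _ _)
          intro x hx
          rw [← lintegral_indicator (measurableSet_cube _ _)]
          apply lintegral_mono
          intro z
          by_cases hz : z ∈ cube (x - cv n h) h
          · have h1 : z ∈ cube (c - cv n h) (2 * l) := by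
              intro i
              have := hz i; have := hx i
              simp only [Set.mem_Ioo, PiLp.sub_apply, cv_apply] at *
              constructor <;> linarith
            have h2 : x ∈ cube z h := by
              intro i
              have := hz i
              simp only [Set.mem_Ioo, PiLp.sub_apply, cv_apply] at *
              constructor <;> linarith
            rw [Set.indicator_of_mem hz, Set.indicator_of_mem h1, Set.indicator_of_mem]
            exact h2
          · rw [Set.indicator_of_notMem hz]; exact zero_le
      _ ≤ ∫⁻ x, ∫⁻ z in cube (c - cv n h) (2 * l),
            {p : EuclideanSpace ℝ (Fin n) × EuclideanSpace ℝ (Fin n) | p.1 ∈ cube p.2 h}.indicator (fun p => g p.1) (x, z) :=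
          setLIntegral_le_lintegral _ _
      _ = ∫⁻ z in cube (c - cv n h) (2 * l), ∫⁻ x,
            {p : EuclideanSpace ℝ (Fin n) × EuclideanSpace ℝ (Fin n) | p.1 ∈ cube p.2 h}.indicator (fun p => g p.1) (x, z) := by
          apply lintegral_lintegral_swap
          exact ((hg.comp measurable_fst).indicator hset).aemeasurable
      _ ≤ ∫⁻ z in cube (c - cv n h) (2 * l), ENNReal.ofReal (S * h ^ n) := by
          apply lintegral_mono
          intro z
          refine le_trans (le_of_eq ?_) (hS z)
          rw [← lintegral_indicator (measurableSet_cube _ _)]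
          rfl
      _ = _ := by
          rw [setLIntegral_const, volume_cube _ (by linarith), mul_comm]
  rw [← ENNReal.mul_le_mul_iff_left (c := ENNReal.ofReal (h ^ n)) (by simpa using hpos) ENNReal.ofReal_ne_top]
  refine key.trans (le_of_eq ?_)
  rw [← ENNReal.ofReal_mul (by positivity), ← ENNReal.ofReal_mul' (by positivity)]
  congr 1; rw [mul_pow]; ring

/-- normalizing constant -/
noncomputable def pc (n : ℕ) : ℝ :=
  Real.Gamma (((n : ℝ) + 1) / 2) / Real.pi ^ (((n : ℝ) + 1) / 2)

lemma pc_pos (n : ℕ) : 0 < pc n := by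
  unfold pc
  have : 0 < Real.Gamma (((n : ℝ) + 1) / 2) := Real.Gamma_pos_of_pos (by positivity)
  positivity

lemma rpow_half_eq (n : ℕ) {a : ℝ} (ha : 0 ≤ a) :
    a ^ (((n : ℝ) + 1) / 2) = (Real.sqrt a) ^ (n + 1) := by
  rw [Real.sqrt_eq_rpow, ← Real.rpow_natCast, ← Real.rpow_mul ha]
  congr 1; push_cast; ring

lemma poisson_eq {t : ℝ} (x : EuclideanSpace ℝ (Fin n)) :
    poissonHK n t x = pc n * t / (Real.sqrt (t ^ 2 + ‖x‖ ^ 2)) ^ (n + 1) := by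
  unfold poissonHK
  rw [rpow_half_eq n (a := t ^ 2 + ‖x‖ ^ 2) (by positivity)]
  rfl

lemma poisson_nonneg {t : ℝ} (ht : 0 < t) (x : EuclideanSpace ℝ (Fin n)) : 0 ≤ poissonHK n t x := by
  rw [poisson_eq]
  have := pc_pos n
  positivity

lemma poisson_symm (t : ℝ) (x y : EuclideanSpace ℝ (Fin n)) :
    poissonHK n t (x - y) = poissonHK n t (y - x) := by
  simp only [poissonHK, norm_sub_rev]

lemma poisson_meas (t : ℝ) : Measurable (poissonHK n t) := by
  unfold poissonHK
  fun_prop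

lemma sqrt_lip {t : ℝ} (u v : EuclideanSpace ℝ (Fin n)) :
    Real.sqrt (t ^ 2 + ‖v‖ ^ 2) ≤ Real.sqrt (t ^ 2 + ‖u‖ ^ 2) + ‖u - v‖ := by
  rw [Real.sqrt_le_iff]
  refine ⟨by positivity, ?_⟩
  have h1 : ‖v‖ ≤ ‖u‖ + ‖u - v‖ := by
    have := norm_sub_norm_le v u
    rw [norm_sub_rev] at this; linarith
  have h2 : ‖u‖ ≤ Real.sqrt (t ^ 2 + ‖u‖ ^ 2) := Real.le_sqrt_of_sq_le (by nlinarith)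
  have h3 := Real.sq_sqrt (show 0 ≤ t ^ 2 + ‖u‖ ^ 2 by positivity)
  have := norm_nonneg v
  have := norm_nonneg u
  have := norm_nonneg (u - v)
  nlinarith [mul_le_mul_of_nonneg_right h2 (norm_nonneg (u - v))]

lemma t_le_sqrt {t : ℝ} (u : EuclideanSpace ℝ (Fin n)) : t ≤ Real.sqrt (t ^ 2 + ‖u‖ ^ 2) :=
  Real.le_sqrt_of_sq_le (by nlinarith [sq_nonneg ‖u‖])

lemma harnack {t ρ : ℝ} (ht : 0 < t) (u v : EuclideanSpace ℝ (Fin n)) (h : ‖u - v‖ ≤ ρ * t) :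
    poissonHK n t u ≤ (1 + ρ) ^ (n + 1) * poissonHK n t v := by
  have hρ : 0 ≤ ρ := by
    by_contra hc
    push Not at hc
    nlinarith [norm_nonneg (u - v)]
  have h1 : Real.sqrt (t ^ 2 + ‖v‖ ^ 2) ≤ (1 + ρ) * Real.sqrt (t ^ 2 + ‖u‖ ^ 2) := by
    refine (sqrt_lip u v).trans ?_
    have := t_le_sqrt (t := t) u
    nlinarith
  rw [poisson_eq, poisson_eq]
  have hu := ht.trans_le (t_le_sqrt (t := t) u)
  have hv := ht.trans_le (t_le_sqrt (t := t) v)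
  have := pow_le_pow_left₀ hv.le h1 (n + 1)
  rw [mul_pow] at this
  have hc := pc_pos n
  rw [mul_div_assoc', div_le_div_iff₀ (by positivity) (by positivity)]
  calc _ ≤ pc n * t * ((1 + ρ) ^ (n + 1) * Real.sqrt (t ^ 2 + ‖u‖ ^ 2) ^ (n + 1)) := by gcongr
    _ = _ := by ring

lemma harnack_diff {t ρ : ℝ} (ht : 0 < t) (u v : EuclideanSpace ℝ (Fin n)) (h : ‖u - v‖ ≤ ρ * t) :
    |poissonHK n t u - poissonHK n t v| ≤ ((1 + ρ) ^ (n + 1) - 1) * poissonHK n t u := by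
  have h1 := harnack ht u v h
  have h2 := harnack ht v u (by rwa [norm_sub_rev])
  have hρ : 0 ≤ ρ := by
    by_contra hc
    push Not at hc
    nlinarith [norm_nonneg (u - v)]
  have hA : 1 ≤ (1 + ρ) ^ (n + 1) := one_le_pow₀ (by linarith)
  have hu := poisson_nonneg ht u
  have hv := poisson_nonneg ht v
  rw [abs_le]
  constructor
  · linarith
  · rcases le_total (poissonHK n t u) (poissonHK n t v) with h3 | h3
    · nlinarith
    · nlinarith

lemma poisson_upper {t m : ℝ} (ht : 0 < t) (hm : 0 < m) (y : EuclideanSpace ℝ (Fin n))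
    (h : m * (1 + ‖y‖) ≤ Real.sqrt (t ^ 2 + ‖y‖ ^ 2)) :
    poissonHK n t y * Real.sqrt (1 + ‖y‖) ≤
      pc n / m ^ (n + 1) * t * (1 + ‖y‖) ^ (-((n : ℝ) + 1 / 2)) := by
  have hc := pc_pos n
  have hy : 0 < 1 + ‖y‖ := by positivity
  have h1 : poissonHK n t y ≤ pc n * t / (m * (1 + ‖y‖)) ^ (n + 1) := by
    rw [poisson_eq]; gcongr
  have e : (1 + ‖y‖) ^ (-((n : ℝ) + 1 / 2)) = Real.sqrt (1 + ‖y‖) / (1 + ‖y‖) ^ (n + 1) := by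
    rw [Real.sqrt_eq_rpow, ← Real.rpow_natCast, ← Real.rpow_sub hy]
    congr 1; push_cast; ring
  calc _ ≤ pc n * t / (m * (1 + ‖y‖)) ^ (n + 1) * Real.sqrt (1 + ‖y‖) := by gcongr
    _ = _ := by rw [e, mul_pow]; field_simp

lemma gamma_lint {a r : ℝ} (ha : 0 < a) (hr : 0 < r) :
    ∫⁻ s in Ioi (0 : ℝ), ENNReal.ofReal (s ^ (a - 1) * Real.exp (-(r * s))) =
      ENNReal.ofReal ((1 / r) ^ a * Real.Gamma a) := by
  have h := Real.integral_rpow_mul_exp_neg_mul_Ioi ha hr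
  have hG := Real.Gamma_pos_of_pos ha
  rw [← h, ofReal_integral_eq_lintegral_ofReal]
  · by_contra hc
    rw [integral_undef hc] at h
    have : 0 < (1 / r) ^ a * Real.Gamma a := by positivity
    linarith
  · filter_upwards [ae_restrict_mem measurableSet_Ioi] with s hs
    have : (0 : ℝ) < s := hs
    show 0 ≤ _
    positivity

lemma gauss_lint {s : ℝ} (hs : 0 < s) :
    ∫⁻ y : EuclideanSpace ℝ (Fin n), ENNReal.ofReal (Real.exp (-s * ‖y‖ ^ 2)) =
      ENNReal.ofReal ((Real.pi / s) ^ ((n : ℝ) / 2)) := by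
  have h := GaussianFourier.integral_rexp_neg_mul_sq_norm (V := EuclideanSpace ℝ (Fin n)) hs
  rw [finrank_euclideanSpace_fin] at h
  rw [← h, ofReal_integral_eq_lintegral_ofReal]
  · by_contra hc
    rw [integral_undef hc] at h
    have : 0 < (Real.pi / s) ^ ((n : ℝ) / 2) := by positivity
    linarith
  · exact Eventually.of_forall fun y => (Real.exp_pos _).le

lemma poisson_mass {t : ℝ} (ht : 0 < t) :
    ∫⁻ y : EuclideanSpace ℝ (Fin n), ENNReal.ofReal (poissonHK n t y) = 1 := by
  set a : ℝ := ((n : ℝ) + 1) / 2 with ha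
  have ha0 : 0 < a := by positivity
  have hG := Real.Gamma_pos_of_pos ha0
  have e1 : ∀ y : EuclideanSpace ℝ (Fin n), ENNReal.ofReal (poissonHK n t y) =
      ENNReal.ofReal (t / Real.pi ^ a) *
        ∫⁻ s in Ioi (0 : ℝ), ENNReal.ofReal (s ^ (a - 1) * Real.exp (-((t ^ 2 + ‖y‖ ^ 2) * s))) := by
    intro y
    rw [gamma_lint ha0 (by positivity), ← ENNReal.ofReal_mul (by positivity)]
    congr 1
    unfold poissonHK
    rw [← ha, Real.div_rpow (by norm_num) (by positivity), Real.one_rpow]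
    field_simp
  simp_rw [e1]
  have hmeas : Measurable (fun p : EuclideanSpace ℝ (Fin n) × ℝ =>
      ENNReal.ofReal (p.2 ^ (a - 1) * Real.exp (-((t ^ 2 + ‖p.1‖ ^ 2) * p.2)))) := by fun_prop
  rw [lintegral_const_mul _ hmeas.lintegral_prod_right', lintegral_lintegral_swap hmeas.aemeasurable]
  have e2 : ∀ s ∈ Ioi (0 : ℝ), ∫⁻ y : EuclideanSpace ℝ (Fin n),
      ENNReal.ofReal (s ^ (a - 1) * Real.exp (-((t ^ 2 + ‖y‖ ^ 2) * s))) =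
      ENNReal.ofReal (Real.pi ^ ((n : ℝ) / 2)) *
        ENNReal.ofReal (s ^ ((1 / 2 : ℝ) - 1) * Real.exp (-(t ^ 2 * s))) := by
    intro s hs
    have hs : 0 < s := hs
    have : ∀ y : EuclideanSpace ℝ (Fin n),
        ENNReal.ofReal (s ^ (a - 1) * Real.exp (-((t ^ 2 + ‖y‖ ^ 2) * s))) =
        ENNReal.ofReal (s ^ (a - 1) * Real.exp (-(t ^ 2 * s))) *
          ENNReal.ofReal (Real.exp (-s * ‖y‖ ^ 2)) := by
      intro y
      rw [← ENNReal.ofReal_mul (by positivity), mul_assoc, ← Real.exp_add]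
      congr 3; ring
    simp_rw [this]
    rw [lintegral_const_mul _ (by fun_prop), gauss_lint hs, ← ENNReal.ofReal_mul (by positivity),
      ← ENNReal.ofReal_mul (by positivity)]
    congr 1
    rw [Real.div_rpow Real.pi_pos.le hs.le]
    have : s ^ ((1 / 2 : ℝ) - 1) = s ^ (a - 1) / s ^ ((n : ℝ) / 2) := by
      rw [← Real.rpow_sub hs]; congr 1; rw [ha]; ring
    rw [this]; field_simp
  rw [setLIntegral_congr_fun measurableSet_Ioi e2, lintegral_const_mul _ (by fun_prop),
    gamma_lint (by norm_num) (by positivity), Real.Gamma_one_half_eq,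
    ← ENNReal.ofReal_mul (by positivity), ← ENNReal.ofReal_mul (by positivity)]
  rw [← ENNReal.ofReal_one]
  congr 1
  rw [← Real.sqrt_eq_rpow, Real.sqrt_div (by norm_num), Real.sqrt_sq ht.le, Real.sqrt_one]
  have : Real.pi ^ a = Real.pi ^ ((n : ℝ) / 2) * Real.sqrt Real.pi := by
    rw [Real.sqrt_eq_rpow, ← Real.rpow_add Real.pi_pos]; congr 1; rw [ha]; ring
  rw [this]; field_simp

/-- `∫ (1+|y|)^{-(n+1/2)}` -/
noncomputable def JJ (n : ℕ) : ℝ :=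
  ∫ y : EuclideanSpace ℝ (Fin n), (1 + ‖y‖) ^ (-((n : ℝ) + 1 / 2))

lemma JJ_lint (n : ℕ) : ∫⁻ y : EuclideanSpace ℝ (Fin n),
    ENNReal.ofReal ((1 + ‖y‖) ^ (-((n : ℝ) + 1 / 2))) = ENNReal.ofReal (JJ n) := by
  unfold JJ
  rw [ofReal_integral_eq_lintegral_ofReal]
  · apply integrable_one_add_norm
    rw [finrank_euclideanSpace_fin]; linarith
  · exact Eventually.of_forall fun y => by show 0 ≤ _; positivity

lemma poisson_set_bound {t m : ℝ} (ht : 0 < t) (hm : 0 < m) (s : Set (EuclideanSpace ℝ (Fin n)))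
    (hs : MeasurableSet s)
    (h : ∀ y ∈ s, m * (1 + ‖y‖) ≤ Real.sqrt (t ^ 2 + ‖y‖ ^ 2)) :
    ∫⁻ y in s, ENNReal.ofReal (poissonHK n t y * Real.sqrt (1 + ‖y‖)) ≤
      ENNReal.ofReal (pc n / m ^ (n + 1) * t * JJ n) := by
  have hc := pc_pos n
  calc _ ≤ ∫⁻ y in s, ENNReal.ofReal (pc n / m ^ (n + 1) * t) *
        ENNReal.ofReal ((1 + ‖y‖) ^ (-((n : ℝ) + 1 / 2))) := by
        apply setLIntegral_mono' hs
        intro y hy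
        rw [← ENNReal.ofReal_mul (by positivity)]
        exact ENNReal.ofReal_le_ofReal (poisson_upper ht hm y (h y hy))
    _ ≤ ∫⁻ y, ENNReal.ofReal (pc n / m ^ (n + 1) * t) *
        ENNReal.ofReal ((1 + ‖y‖) ^ (-((n : ℝ) + 1 / 2))) := setLIntegral_le_lintegral _ _
    _ = _ := by
      rw [lintegral_const_mul _ (by fun_prop), JJ_lint, ← ENNReal.ofReal_mul (by positivity)]

lemma poisson_full_bound {t : ℝ} (ht : 0 < t) :
    ∃ D : ℝ, 0 ≤ D ∧ ∫⁻ y : EuclideanSpace ℝ (Fin n),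
      ENNReal.ofReal (poissonHK n t y * Real.sqrt (1 + ‖y‖)) ≤ ENNReal.ofReal D := by
  have hm : 0 < min t 1 / 2 := by positivity
  have := poisson_set_bound (n := n) ht hm Set.univ MeasurableSet.univ (by
    intro y _
    apply Real.le_sqrt_of_sq_le
    have h1 : min t 1 ≤ t := min_le_left _ _
    have h2 : min t 1 ≤ 1 := min_le_right _ _
    have h3 : 0 < min t 1 := by positivity
    generalize min t 1 = q at *
    have hy := norm_nonneg y
    have h4 : q * ‖y‖ ≤ ‖y‖ := by nlinarith
    have h5 : q * ‖y‖ ≥ 0 := by positivity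
    have : q / 2 * (1 + ‖y‖) ≤ (t + ‖y‖) / 2 := by linarith
    calc (q / 2 * (1 + ‖y‖)) ^ 2 ≤ ((t + ‖y‖) / 2) ^ 2 := by gcongr
      _ ≤ _ := by nlinarith [sq_nonneg (t - ‖y‖), sq_nonneg (t + ‖y‖)])
  rw [Measure.restrict_univ] at this
  refine ⟨_, ?_, this⟩
  have := pc_pos n
  have : 0 ≤ JJ n := integral_nonneg fun y => by show 0 ≤ _; positivity
  positivity

lemma avg_nested {f : EuclideanSpace ℝ (Fin n) → ℝ} (hf : LocallyIntegrable f)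
    {c c' : EuclideanSpace ℝ (Fin n)} {l l' K : ℝ} (hl : 0 < l) (hl' : 0 < l') (hK : 0 ≤ K)
    (hsub : cube c l ⊆ cube c' l') (h3 : l' ≤ 3 * l) (hosc : cubeOsc f c' l' ≤ K) :
    |cubeAvg f c l - cubeAvg f c' l'| ≤ 3 ^ n * K := by
  have hpos : 0 < l ^ n := by positivity
  have h1 := avg_diff_lint hl (intOn_cube hf c hl) (cubeAvg f c' l')
  have h2 := h1.trans ((lintegral_mono_set hsub).trans (osc_lint hl' (intOn_cube hf c' hl') hosc))
  rw [Real.enorm_eq_ofReal_abs, ← ENNReal.ofReal_mul (by positivity),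
    ENNReal.ofReal_le_ofReal_iff (by positivity)] at h2
  have h4 : l' ^ n ≤ 3 ^ n * l ^ n := by rw [← mul_pow]; gcongr
  refine le_of_mul_le_mul_right (h2.trans ?_) hpos
  calc K * l' ^ n ≤ K * (3 ^ n * l ^ n) := by gcongr
    _ = _ := by ring

lemma avg_double {f : EuclideanSpace ℝ (Fin n) → ℝ} (hf : LocallyIntegrable f) {K : ℝ} (hK : 0 ≤ K)
    (hosc : ∀ c l, 0 < l → cubeOsc f c l ≤ K) (c : EuclideanSpace ℝ (Fin n)) {h : ℝ} (hh : 0 < h)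
    (k : ℕ) : |cubeAvg f c h - cubeAvg f c (2 ^ k * h)| ≤ k * (3 ^ n * K) := by
  induction k with
  | zero => simp
  | succ k ih =>
    have := avg_nested hf (c := c) (c' := c) (l := 2 ^ k * h) (l' := 2 ^ (k + 1) * h) (by positivity)
      (by positivity) hK (by
        intro x hx i
        have := hx i
        simp only [Set.mem_Ioo] at *
        have h2 : 0 < 2 ^ k * h := by positivity
        rw [pow_succ]
        constructor <;> linarith) (by
        have h2 : 0 < 2 ^ k * h := by positivity
        rw [pow_succ]; linarith) (hosc _ _ (by positivity))
    push_cast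
    calc _ ≤ _ := abs_sub_le _ (cubeAvg f c (2 ^ k * h)) _
      _ ≤ _ := by linarith

lemma cube_sub_big (c y : EuclideanSpace ℝ (Fin n)) {l : ℝ} (hy : ‖y‖ ≤ l) :
    cube (c - y) l ⊆ cube (c - cv n l) (3 * l) := by
  intro x hx i
  have := hx i
  have h1 := (coord_le_norm y i).trans hy
  rw [abs_le] at h1
  simp only [Set.mem_Ioo, PiLp.sub_apply, cv_apply] at *
  constructor <;> linarith

lemma avg_shift {f : EuclideanSpace ℝ (Fin n) → ℝ} (hf : LocallyIntegrable f) {K : ℝ} (hK : 0 ≤ K)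
    (hosc : ∀ c l, 0 < l → cubeOsc f c l ≤ K) (c y : EuclideanSpace ℝ (Fin n)) {h : ℝ} (hh : 0 < h)
    (k : ℕ) (hy : ‖y‖ ≤ 2 ^ k * h) :
    |cubeAvg f (c - y) h - cubeAvg f c h| ≤ (2 * k + 2) * (3 ^ n * K) := by
  have h1 := avg_double hf hK hosc c hh k
  have h2 := avg_double hf hK hosc (c - y) hh k
  have hl : 0 < 2 ^ k * h := by positivity
  have h3 := avg_nested hf hl (by positivity) hK (cube_sub_big c y hy) le_rfl
    (hosc _ _ (by positivity))
  have h4 := avg_nested hf hl (by positivity) hK (cube_sub_big c 0 (by simpa using hl.le)) le_rfl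
    (hosc _ _ (by positivity))
  rw [sub_zero] at h4
  rw [abs_le] at *
  constructor <;> linarith [h1.1, h1.2, h2.1, h2.2, h3.1, h3.2, h4.1, h4.2]

lemma exists_k (r : ℝ) (hr : 0 ≤ r) : ∃ k : ℕ, r ≤ 2 ^ k ∧ 2 * (k : ℝ) + 4 ≤ 14 * Real.sqrt (1 + r) := by
  refine ⟨⌈Real.log (1 + r) / Real.log 2⌉₊, ?_, ?_⟩
  · have hlog : 0 < Real.log 2 := Real.log_pos (by norm_num)
    have h1 := Nat.le_ceil (Real.log (1 + r) / Real.log 2)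
    rw [div_le_iff₀ hlog, ← Real.log_pow] at h1
    have := (Real.log_le_log_iff (by positivity) (by positivity)).1 h1
    linarith
  · have hlog : 1 / 2 ≤ Real.log 2 := by linarith [Real.log_two_gt_d9]
    have hp : 0 ≤ Real.log (1 + r) := Real.log_nonneg (by linarith)
    have h0 : 0 ≤ Real.log (1 + r) / Real.log 2 := by positivity
    have h1 := Nat.ceil_lt_add_one h0
    have h2 : Real.log (1 + r) / Real.log 2 ≤ 2 * Real.log (1 + r) := by
      rw [div_le_iff₀ (by linarith)]; nlinarith
    have h3 : Real.log (1 + r) ≤ 2 * Real.sqrt (1 + r) := by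
      have := Real.log_le_rpow_div (x := 1 + r) (ε := 1 / 2) (by linarith) (by norm_num)
      rw [← Real.sqrt_eq_rpow] at this
      linarith
    have h4 : 1 ≤ Real.sqrt (1 + r) := Real.one_le_sqrt.2 (by linarith)
    linarith

lemma growth {f : EuclideanSpace ℝ (Fin n) → ℝ} (hf : LocallyIntegrable f) {K : ℝ} (hK : 0 ≤ K)
    (hosc : ∀ c l, 0 < l → cubeOsc f c l ≤ K) (c y : EuclideanSpace ℝ (Fin n)) {h : ℝ}
    (hh : 0 < h) :
    ∫⁻ x in cube c h, ‖f (x - y) - cubeAvg f c h‖ₑ ≤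
      ENNReal.ofReal ((14 * Real.sqrt (1 + ‖y‖ / h) - 1) * (3 ^ n * K) * h ^ n) := by
  obtain ⟨k, hk1, hk2⟩ := exists_k (‖y‖ / h) (by positivity)
  rw [div_le_iff₀ hh] at hk1
  have h1 := avg_shift hf hK hosc c y hh k hk1
  have hpos : 0 < h ^ n := by positivity
  have hK3 : K ≤ 3 ^ n * K := by
    have : (1 : ℝ) ≤ 3 ^ n := one_le_pow₀ (by norm_num)
    nlinarith
  calc ∫⁻ x in cube c h, ‖f (x - y) - cubeAvg f c h‖ₑ
      = ∫⁻ x in cube (c - y) h, ‖f x - cubeAvg f c h‖ₑ :=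
        lintegral_cube_shift (fun x => ‖f x - cubeAvg f c h‖ₑ) c y h
    _ ≤ ∫⁻ x in cube (c - y) h, (‖f x - cubeAvg f (c - y) h‖ₑ +
          ENNReal.ofReal ((2 * k + 2) * (3 ^ n * K))) := by
        apply lintegral_mono
        intro x
        dsimp only
        calc ‖f x - cubeAvg f c h‖ₑ
            = ‖(f x - cubeAvg f (c - y) h) + (cubeAvg f (c - y) h - cubeAvg f c h)‖ₑ := by
              congr 1; ring
          _ ≤ _ := enorm_add_le _ _
          _ ≤ _ := by
            gcongr
            rw [Real.enorm_eq_ofReal_abs]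
            exact ENNReal.ofReal_le_ofReal h1
    _ ≤ ENNReal.ofReal (K * h ^ n) + ENNReal.ofReal ((2 * k + 2) * (3 ^ n * K)) *
          ENNReal.ofReal (h ^ n) := by
        rw [lintegral_add_right _ (by fun_prop), setLIntegral_const, volume_cube _ hh]
        gcongr
        exact osc_lint hh (intOn_cube hf _ hh) (hosc _ _ hh)
    _ ≤ _ := by
        rw [← ENNReal.ofReal_mul (by positivity), ← ENNReal.ofReal_add (by positivity) (by positivity)]
        apply ENNReal.ofReal_le_ofReal
        rw [← add_mul]
        gcongr
        have : 0 ≤ 3 ^ n * K := by positivity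
        nlinarith

lemma growth2 {f : EuclideanSpace ℝ (Fin n) → ℝ} (hm : Measurable f)
    (hf : LocallyIntegrable f) {K : ℝ} (hK : 0 ≤ K)
    (hosc : ∀ c l, 0 < l → cubeOsc f c l ≤ K) (c y : EuclideanSpace ℝ (Fin n)) {h : ℝ}
    (hh : 0 < h) :
    ∫⁻ x in cube c h, ‖f x - f (x - y)‖ₑ ≤
      ENNReal.ofReal (14 * Real.sqrt (1 + ‖y‖ / h) * (3 ^ n * K) * h ^ n) := by
  have hpos : 0 < h ^ n := by positivity
  have hK3 : K ≤ 3 ^ n * K := by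
    have : (1 : ℝ) ≤ 3 ^ n := one_le_pow₀ (by norm_num)
    nlinarith
  have hs : 1 ≤ Real.sqrt (1 + ‖y‖ / h) := Real.one_le_sqrt.2 (by
    have : 0 ≤ ‖y‖ / h := by positivity
    linarith)
  calc ∫⁻ x in cube c h, ‖f x - f (x - y)‖ₑ ≤ ∫⁻ x in cube c h,
        (‖f x - cubeAvg f c h‖ₑ + ‖f (x - y) - cubeAvg f c h‖ₑ) := by
        apply lintegral_mono
        intro x
        dsimp only
        calc ‖f x - f (x - y)‖ₑ = ‖(f x - cubeAvg f c h) - (f (x - y) - cubeAvg f c h)‖ₑ := by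
              congr 1; ring
          _ ≤ _ := enorm_sub_le
    _ ≤ ENNReal.ofReal (K * h ^ n) + ENNReal.ofReal ((14 * Real.sqrt (1 + ‖y‖ / h) - 1) * (3 ^ n * K) * h ^ n) := by
        rw [lintegral_add_left (by fun_prop)]
        gcongr
        · exact osc_lint hh (intOn_cube hf _ hh) (hosc _ _ hh)
        · exact growth hf hK hosc c y hh
    _ ≤ _ := by
        rw [← ENNReal.ofReal_add (by positivity) (by
          have : 0 ≤ 14 * Real.sqrt (1 + ‖y‖ / h) - 1 := by linarith
          positivity)]
        apply ENNReal.ofReal_le_ofReal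
        rw [← add_mul]
        gcongr
        linarith

lemma small_shift {f : EuclideanSpace ℝ (Fin n) → ℝ} (hm : Measurable f)
    (hf : LocallyIntegrable f) {ε : ℝ} {h : ℝ} (hh : 0 < h) (hε : 0 ≤ ε)
    (hosc : ∀ c, cubeOsc f c (3 * h) ≤ ε) (c y : EuclideanSpace ℝ (Fin n)) (hy : ‖y‖ ≤ h) :
    ∫⁻ x in cube c h, ‖f x - f (x - y)‖ₑ ≤ ENNReal.ofReal (2 * 3 ^ n * ε * h ^ n) := by
  set a := cubeAvg f (c - cv n h) (3 * h) with ha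
  have hb : ∫⁻ x in cube (c - cv n h) (3 * h), ‖f x - a‖ₑ ≤ ENNReal.ofReal (ε * (3 * h) ^ n) :=
    osc_lint (by positivity) (intOn_cube hf _ (by positivity)) (hosc _)
  calc ∫⁻ x in cube c h, ‖f x - f (x - y)‖ₑ ≤ ∫⁻ x in cube c h,
        (‖f x - a‖ₑ + ‖f (x - y) - a‖ₑ) := by
        apply lintegral_mono
        intro x
        dsimp only
        calc ‖f x - f (x - y)‖ₑ = ‖(f x - a) - (f (x - y) - a)‖ₑ := by
              congr 1; ring
          _ ≤ _ := enorm_sub_le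
    _ ≤ ENNReal.ofReal (ε * (3 * h) ^ n) + ENNReal.ofReal (ε * (3 * h) ^ n) := by
        rw [lintegral_add_left (by fun_prop)]
        gcongr
        · refine (lintegral_mono_set ?_).trans hb
          have := cube_sub_big c 0 (l := h) (by simpa using hh.le)
          rwa [sub_zero] at this
        · rw [lintegral_cube_shift (fun x => ‖f x - a‖ₑ) c y h]
          exact (lintegral_mono_set (cube_sub_big c y hy)).trans hb
    _ = _ := by
        rw [← ENNReal.ofReal_add (by positivity) (by positivity)]
        congr 1; rw [mul_pow]; ring

lemma point_bound {f : EuclideanSpace ℝ (Fin n) → ℝ} (hm : Measurable f)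
    (hf : LocallyIntegrable f) {K : ℝ} (hK : 0 ≤ K)
    (hosc : ∀ c l, 0 < l → cubeOsc f c l ≤ K) {t : ℝ} (ht : 0 < t) :
    ∃ D : ℝ, 0 ≤ D ∧ ∀ x, ∫⁻ y, ENNReal.ofReal (poissonHK n t (x - y)) * ‖f y - cubeAvg f x 1‖ₑ
      ≤ ENNReal.ofReal D := by
  obtain ⟨D0, hD0, hD⟩ := poisson_full_bound (n := n) ht
  have hP := poisson_meas (n := n) t
  set M : ℝ := (1 + n / t) ^ (n + 1) with hM
  refine ⟨M * (14 * (3 ^ n * K) * D0), by positivity, fun x => ?_⟩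
  set a := cubeAvg f x 1 with ha
  have hv : volume (cube x 1) = 1 := by rw [volume_cube x one_pos]; simp
  calc ∫⁻ y, ENNReal.ofReal (poissonHK n t (x - y)) * ‖f y - a‖ₑ
      = ∫⁻ z in cube x 1, ∫⁻ y, ENNReal.ofReal (poissonHK n t (x - y)) * ‖f y - a‖ₑ := by
        rw [setLIntegral_const, hv, mul_one]
    _ ≤ ∫⁻ z in cube x 1, ∫⁻ y, ENNReal.ofReal M *
          (ENNReal.ofReal (poissonHK n t (z - y)) * ‖f y - a‖ₑ) := by
        apply setLIntegral_mono' (measurableSet_cube _ _)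
        intro z hz
        apply lintegral_mono
        intro y
        dsimp only
        rw [← mul_assoc, ← ENNReal.ofReal_mul (by positivity)]
        gcongr
        apply harnack ht
        have := bounded_cube x one_pos hz
        rw [Metric.mem_closedBall, dist_eq_norm, norm_sub_rev] at this
        rw [sub_sub_sub_cancel_right]
        rw [div_mul_cancel₀ _ ht.ne']
        simpa using this
    _ = ENNReal.ofReal M * ∫⁻ z in cube x 1, ∫⁻ y,
          (ENNReal.ofReal (poissonHK n t y) * ‖f (z - y) - a‖ₑ) := by
        rw [← lintegral_const_mul' _ _ ENNReal.ofReal_ne_top]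
        congr 1; ext z
        rw [lintegral_const_mul' _ _ ENNReal.ofReal_ne_top]
        congr 1
        rw [← lintegral_sub_left_eq_self _ z]
        simp
    _ = ENNReal.ofReal M * ∫⁻ y, ∫⁻ z in cube x 1,
          (ENNReal.ofReal (poissonHK n t y) * ‖f (z - y) - a‖ₑ) := by
        rw [lintegral_lintegral_swap]
        apply Measurable.aemeasurable
        simp only [Function.uncurry_def]
        fun_prop
    _ ≤ ENNReal.ofReal M * ∫⁻ y, ENNReal.ofReal (14 * (3 ^ n * K)) *
          ENNReal.ofReal (poissonHK n t y * Real.sqrt (1 + ‖y‖)) := by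
        gcongr with y
        rw [lintegral_const_mul' _ _ ENNReal.ofReal_ne_top, ← ENNReal.ofReal_mul (by positivity)]
        have h1 := growth hf hK hosc x y one_pos
        rw [← ha] at h1
        refine (mul_le_mul_right h1 _).trans ?_
        rw [← ENNReal.ofReal_mul (poisson_nonneg ht y)]
        apply ENNReal.ofReal_le_ofReal
        rw [one_pow, mul_one, div_one]
        have h2 := poisson_nonneg ht y
        have h3 : 0 ≤ poissonHK n t y * (3 ^ n * K) := by positivity
        nlinarith
    _ ≤ _ := by
        rw [lintegral_const_mul' _ _ ENNReal.ofReal_ne_top,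
          ENNReal.ofReal_mul (p := M) (by positivity),
          ENNReal.ofReal_mul (p := 14 * (3 ^ n * K)) (by positivity)]
        gcongr

lemma poisson_shift_lint {t : ℝ} (ht : 0 < t) (x : EuclideanSpace ℝ (Fin n)) :
    ∫⁻ y, ENNReal.ofReal (poissonHK n t (x - y)) = 1 := by
  rw [lintegral_sub_left_eq_self (fun y => ENNReal.ofReal (poissonHK n t y)), poisson_mass ht]

lemma poisson_shift_integrable {t : ℝ} (ht : 0 < t) (x : EuclideanSpace ℝ (Fin n)) :
    Integrable (fun y => poissonHK n t (x - y)) := by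
  have hP := poisson_meas (n := n) t
  refine ⟨Measurable.aestronglyMeasurable (by fun_prop), ?_⟩
  rw [hasFiniteIntegral_iff_ofReal (Eventually.of_forall fun y => poisson_nonneg ht _),
    poisson_shift_lint ht]
  exact ENNReal.one_lt_top

lemma poisson_shift_integral {t : ℝ} (ht : 0 < t) (x : EuclideanSpace ℝ (Fin n)) :
    ∫ y, poissonHK n t (x - y) = 1 := by
  rw [integral_eq_lintegral_of_nonneg_ae (Eventually.of_forall fun y => poisson_nonneg ht _)
    (poisson_shift_integrable ht x).1, poisson_shift_lint ht]
  simp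

lemma poisson_sub_integrable {f : EuclideanSpace ℝ (Fin n) → ℝ} (hm : Measurable f)
    (hf : LocallyIntegrable f) {K : ℝ} (hK : 0 ≤ K)
    (hosc : ∀ c l, 0 < l → cubeOsc f c l ≤ K) {t : ℝ} (ht : 0 < t) (x : EuclideanSpace ℝ (Fin n))
    (b : ℝ) :
    Integrable (fun y => poissonHK n t (x - y) * (f y - b)) := by
  obtain ⟨D, hD0, hD⟩ := point_bound hm hf hK hosc ht
  have hP := poisson_meas (n := n) t
  have h1 : Integrable (fun y => poissonHK n t (x - y) * (f y - cubeAvg f x 1)) := by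
    refine ⟨Measurable.aestronglyMeasurable (by fun_prop), ?_⟩
    rw [hasFiniteIntegral_iff_enorm]
    refine lt_of_le_of_lt (le_trans (le_of_eq ?_) (hD x)) ENNReal.ofReal_lt_top
    congr 1; ext y
    rw [enorm_mul, Real.enorm_of_nonneg (poisson_nonneg ht _)]
  have h2 := h1.add ((poisson_shift_integrable ht x).mul_const (cubeAvg f x 1 - b))
  refine h2.congr (Eventually.of_forall fun y => ?_)
  simp only [Pi.add_apply]; ring

lemma poisson_mul_integrable {f : EuclideanSpace ℝ (Fin n) → ℝ} (hm : Measurable f)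
    (hf : LocallyIntegrable f) {K : ℝ} (hK : 0 ≤ K)
    (hosc : ∀ c l, 0 < l → cubeOsc f c l ≤ K) {t : ℝ} (ht : 0 < t) (x : EuclideanSpace ℝ (Fin n)) :
    Integrable (fun y => poissonHK n t (x - y) * f y) := by
  simpa using poisson_sub_integrable hm hf hK hosc ht x 0

lemma poisson_mul_integrable' {f : EuclideanSpace ℝ (Fin n) → ℝ} (hm : Measurable f)
    (hf : LocallyIntegrable f) {K : ℝ} (hK : 0 ≤ K)
    (hosc : ∀ c l, 0 < l → cubeOsc f c l ≤ K) {t : ℝ} (ht : 0 < t) (x : EuclideanSpace ℝ (Fin n)) :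
    Integrable (fun y => poissonHK n t y * f (x - y)) := by
  have := (poisson_mul_integrable hm hf hK hosc ht x).comp_sub_left x
  simpa using this

lemma ext_eq (f : EuclideanSpace ℝ (Fin n) → ℝ) (t : ℝ) (x : EuclideanSpace ℝ (Fin n)) :
    poissonExt f x t = ∫ y, poissonHK n t y * f (x - y) := by
  unfold poissonExt
  rw [← integral_sub_left_eq_self _ _ x]
  simp

lemma ext_meas {f : EuclideanSpace ℝ (Fin n) → ℝ} (hm : Measurable f) (t : ℝ) :
    Measurable (fun x => poissonExt f x t) := by
  have hP := poisson_meas (n := n) t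
  unfold poissonExt
  apply StronglyMeasurable.measurable
  apply StronglyMeasurable.integral_prod_right
    (f := fun x y : EuclideanSpace ℝ (Fin n) => poissonHK n t (x - y) * f y)
  apply Measurable.stronglyMeasurable
  simp only [Function.uncurry_def]
  fun_prop

lemma mink1 {f : EuclideanSpace ℝ (Fin n) → ℝ} (hm : Measurable f)
    (hf : LocallyIntegrable f) {K : ℝ} (hK : 0 ≤ K)
    (hosc : ∀ c l, 0 < l → cubeOsc f c l ≤ K) {t : ℝ} (ht : 0 < t) (x : EuclideanSpace ℝ (Fin n)) :
    ‖f x - poissonExt f x t‖ₑ ≤ ∫⁻ y, ENNReal.ofReal (poissonHK n t y) * ‖f x - f (x - y)‖ₑ := by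
  have hi : Integrable (fun y : EuclideanSpace ℝ (Fin n) => poissonHK n t y) := by
    simpa using (poisson_shift_integrable (n := n) ht 0).comp_sub_left 0
  have h1 : ∫ y : EuclideanSpace ℝ (Fin n), poissonHK n t y = 1 := by
    rw [← poisson_shift_integral (n := n) ht 0,
      integral_sub_left_eq_self (fun y : EuclideanSpace ℝ (Fin n) => poissonHK n t y)]
  have e : f x - poissonExt f x t = ∫ y, poissonHK n t y * (f x - f (x - y)) := by
    simp_rw [mul_sub]
    rw [integral_sub (hi.mul_const _) (poisson_mul_integrable' hm hf hK hosc ht x),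
      integral_mul_const, h1, ext_eq, one_mul]
  rw [e]
  refine (enorm_integral_le_lintegral_enorm _).trans (le_of_eq ?_)
  congr 1; ext y
  rw [enorm_mul, Real.enorm_of_nonneg (poisson_nonneg ht _)]

lemma mink2 {f : EuclideanSpace ℝ (Fin n) → ℝ} (hm : Measurable f)
    (hf : LocallyIntegrable f) {K : ℝ} (hK : 0 ≤ K)
    (hosc : ∀ c l, 0 < l → cubeOsc f c l ≤ K) {t : ℝ} (ht : 0 < t)
    (x z : EuclideanSpace ℝ (Fin n)) :
    ‖poissonExt f x t - poissonExt f z t‖ₑ ≤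
      ∫⁻ y, ENNReal.ofReal (poissonHK n t y) * ‖f (x - y) - f (z - y)‖ₑ := by
  have e : poissonExt f x t - poissonExt f z t =
      ∫ y, poissonHK n t y * (f (x - y) - f (z - y)) := by
    simp_rw [mul_sub]
    rw [integral_sub (poisson_mul_integrable' hm hf hK hosc ht x)
      (poisson_mul_integrable' hm hf hK hosc ht z), ext_eq, ext_eq]
  rw [e]
  refine (enorm_integral_le_lintegral_enorm _).trans (le_of_eq ?_)
  congr 1; ext y
  rw [enorm_mul, Real.enorm_of_nonneg (poisson_nonneg ht _)]

lemma dosc_ext {f : EuclideanSpace ℝ (Fin n) → ℝ} (hm : Measurable f)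
    (hf : LocallyIntegrable f) {K : ℝ} (hK : 0 ≤ K)
    (hosc : ∀ c l, 0 < l → cubeOsc f c l ≤ K) {t : ℝ} (ht : 0 < t) {l : ℝ} (hl : 0 < l) {K' : ℝ}
    (hosc' : ∀ c, cubeOsc f c l ≤ K') (c : EuclideanSpace ℝ (Fin n)) :
    dosc (fun x => poissonExt f x t) c l ≤ ENNReal.ofReal (2 * K' * l ^ n * l ^ n) := by
  have hP := poisson_meas (n := n) t
  have shift : ∀ y, dosc (fun x => f (x - y)) c l = dosc f (c - y) l := by
    intro y
    unfold dosc
    rw [← lintegral_cube_shift (fun x => ∫⁻ z in cube (c - y) l, ‖f x - f z‖ₑ)]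
    congr 1; ext x
    rw [← lintegral_cube_shift (fun z => ‖f (x - y) - f z‖ₑ)]
  calc dosc (fun x => poissonExt f x t) c l
      ≤ ∫⁻ x in cube c l, ∫⁻ z in cube c l, ∫⁻ y,
          ENNReal.ofReal (poissonHK n t y) * ‖f (x - y) - f (z - y)‖ₑ := by
        unfold dosc
        gcongr with x z
        exact mink2 hm hf hK hosc ht x z
    _ = ∫⁻ x in cube c l, ∫⁻ y, ∫⁻ z in cube c l,
          ENNReal.ofReal (poissonHK n t y) * ‖f (x - y) - f (z - y)‖ₑ := by
        congr 1; ext x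
        rw [lintegral_lintegral_swap]
        apply Measurable.aemeasurable
        simp only [Function.uncurry_def]
        fun_prop
    _ = ∫⁻ y, ∫⁻ x in cube c l, ∫⁻ z in cube c l,
          ENNReal.ofReal (poissonHK n t y) * ‖f (x - y) - f (z - y)‖ₑ := by
        rw [lintegral_lintegral_swap]
        apply Measurable.aemeasurable
        simp only [Function.uncurry_def]
        apply Measurable.lintegral_prod_right
          (f := fun (p : EuclideanSpace ℝ (Fin n) × EuclideanSpace ℝ (Fin n)) z =>
            ENNReal.ofReal (poissonHK n t p.2) * ‖f (p.1 - p.2) - f (z - p.2)‖ₑ)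
        simp only [Function.uncurry_def]
        fun_prop
    _ = ∫⁻ y, ENNReal.ofReal (poissonHK n t y) * dosc f (c - y) l := by
        congr 1; ext y
        rw [← shift y]
        unfold dosc
        rw [← lintegral_const_mul' _ _ ENNReal.ofReal_ne_top]
        congr 1; ext x
        rw [← lintegral_const_mul' _ _ ENNReal.ofReal_ne_top]
    _ ≤ ∫⁻ y, ENNReal.ofReal (poissonHK n t y) * ENNReal.ofReal (2 * K' * l ^ n * l ^ n) := by
        gcongr with y
        exact dosc_le_of_osc hm hl (intOn_cube hf _ hl) (hosc' _)
    _ = _ := by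
        rw [lintegral_mul_const' _ _ ENNReal.ofReal_ne_top, poisson_mass ht, one_mul]

lemma ext_unif {f : EuclideanSpace ℝ (Fin n) → ℝ} (hm : Measurable f)
    (hf : LocallyIntegrable f) {K : ℝ} (hK : 0 ≤ K)
    (hosc : ∀ c l, 0 < l → cubeOsc f c l ≤ K) {t : ℝ} (ht : 0 < t) {ε : ℝ} (hε : 0 < ε) :
    ∃ δ > 0, ∀ x z, ‖x - z‖ ≤ δ → |poissonExt f x t - poissonExt f z t| ≤ ε := by
  obtain ⟨D, hD0, hD⟩ := point_bound hm hf hK hosc ht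
  have hlim : Tendsto (fun ρ : ℝ => ((1 + ρ) ^ (n + 1) - 1) * D) (nhds 0) (nhds 0) := by
    have : Continuous (fun ρ : ℝ => ((1 + ρ) ^ (n + 1) - 1) * D) := by fun_prop
    simpa using this.tendsto 0
  have hev : ∀ᶠ ρ : ℝ in nhdsWithin 0 (Ioi 0), ((1 + ρ) ^ (n + 1) - 1) * D < ε :=
    (hlim.mono_left nhdsWithin_le_nhds).eventually (gt_mem_nhds hε)
  obtain ⟨ρ, h1, hρ⟩ := (hev.and self_mem_nhdsWithin).exists
  have hρ : 0 < ρ := hρ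
  refine ⟨ρ * t, by positivity, fun x z hxz => ?_⟩
  set a := cubeAvg f x 1
  have hx := poisson_sub_integrable hm hf hK hosc ht x a
  have hz := poisson_sub_integrable hm hf hK hosc ht z a
  have e0 : ∀ w, ∫ y, poissonHK n t (w - y) * (f y - a) = poissonExt f w t - a := by
    intro w
    simp_rw [mul_sub]
    rw [integral_sub (poisson_mul_integrable hm hf hK hosc ht w)
      ((poisson_shift_integrable ht w).mul_const _), integral_mul_const,
      poisson_shift_integral ht, one_mul]
    rfl
  have e : poissonExt f x t - poissonExt f z t =
      ∫ y, (poissonHK n t (x - y) - poissonHK n t (z - y)) * (f y - a) := by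
    simp_rw [sub_mul]
    rw [integral_sub hx hz, e0, e0]; ring
  have hA : 0 ≤ (1 + ρ) ^ (n + 1) - 1 := by
    have : 1 ≤ (1 + ρ) ^ (n + 1) := one_le_pow₀ (by linarith)
    linarith
  have : ‖poissonExt f x t - poissonExt f z t‖ₑ ≤ ENNReal.ofReal (((1 + ρ) ^ (n + 1) - 1) * D) := by
    rw [e]
    refine (enorm_integral_le_lintegral_enorm _).trans ?_
    calc _ ≤ ∫⁻ y, ENNReal.ofReal ((1 + ρ) ^ (n + 1) - 1) *
          (ENNReal.ofReal (poissonHK n t (x - y)) * ‖f y - a‖ₑ) := by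
          apply lintegral_mono
          intro y
          dsimp only
          rw [enorm_mul, ← mul_assoc, ← ENNReal.ofReal_mul hA, Real.enorm_eq_ofReal_abs]
          gcongr
          apply harnack_diff ht
          rwa [sub_sub_sub_cancel_right]
      _ ≤ _ := by
          rw [lintegral_const_mul' _ _ ENNReal.ofReal_ne_top, ENNReal.ofReal_mul hA]
          gcongr
          exact hD x
  rw [Real.enorm_eq_ofReal_abs, ENNReal.ofReal_le_ofReal_iff (by positivity)] at this
  linarith

lemma ext_cont {f : EuclideanSpace ℝ (Fin n) → ℝ} (hm : Measurable f)
    (hf : LocallyIntegrable f) {K : ℝ} (hK : 0 ≤ K)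
    (hosc : ∀ c l, 0 < l → cubeOsc f c l ≤ K) {t : ℝ} (ht : 0 < t) :
    Continuous (fun x => poissonExt f x t) := by
  rw [Metric.continuous_iff]
  intro z ε hε
  obtain ⟨δ, hδ, h⟩ := ext_unif hm hf hK hosc ht (half_pos hε)
  refine ⟨δ, hδ, fun x hx => ?_⟩
  rw [dist_eq_norm] at hx
  rw [Real.dist_eq]
  linarith [h x z hx.le]

lemma large_cubes {f : EuclideanSpace ℝ (Fin n) → ℝ} (hm : Measurable f)
    (hf : LocallyIntegrable f) {K : ℝ} (hK : 0 ≤ K)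
    (hosc : ∀ c l, 0 < l → cubeOsc f c l ≤ K) {h ε : ℝ} (hh : 0 < h) (hε : 0 ≤ ε)
    (hosc3 : ∀ c, cubeOsc f c (3 * h) ≤ ε) :
    ∃ A : ℝ, 0 ≤ A ∧ ∀ t, 0 < t → ∀ c l, h ≤ l →
      ∫⁻ x in cube c l, ‖f x - poissonExt f x t‖ₑ ≤
        ENNReal.ofReal ((2 ^ n * (2 * 3 ^ n * ε) + A * t) * l ^ n) := by
  have hJ : 0 ≤ JJ n := integral_nonneg fun y => by show 0 ≤ _; positivity
  have hpc := pc_pos n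
  set m : ℝ := h / (1 + h) with hmdef
  have hm0 : 0 < m := by positivity
  set B : ℝ := 2 ^ n * (14 * (3 ^ n * K) * Real.sqrt (1 + 1 / h)) with hB
  have hB0 : 0 ≤ B := by positivity
  refine ⟨B * (pc n / m ^ (n + 1) * JJ n), by positivity, fun t ht c l hl => ?_⟩
  have hP := poisson_meas (n := n) t
  have hl0 : 0 < l := hh.trans_le hl
  have hset : MeasurableSet {y : EuclideanSpace ℝ (Fin n) | h < ‖y‖} :=
    measurableSet_lt measurable_const measurable_norm
  have hinner : ∀ y, ∫⁻ x in cube c l, ‖f x - f (x - y)‖ₑ ≤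
      ENNReal.ofReal (2 ^ n * (2 * 3 ^ n * ε) * l ^ n) +
        {y : EuclideanSpace ℝ (Fin n) | h < ‖y‖}.indicator
          (fun y => ENNReal.ofReal (B * l ^ n) * ENNReal.ofReal (Real.sqrt (1 + ‖y‖))) y := by
    intro y
    by_cases hy : ‖y‖ ≤ h
    · refine le_trans ?_ le_self_add
      exact lint_large_cube (by fun_prop) hh (fun c => small_shift hm hf hh hε hosc3 c y hy) c hl
    · refine le_trans ?_ le_add_self
      rw [Set.indicator_of_mem (by simpa using hy), ← ENNReal.ofReal_mul (by positivity)]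
      refine (lint_large_cube (by fun_prop) hh (fun c => growth2 hm hf hK hosc c y hh) c hl).trans ?_
      apply ENNReal.ofReal_le_ofReal
      have : Real.sqrt (1 + ‖y‖ / h) ≤ Real.sqrt (1 + 1 / h) * Real.sqrt (1 + ‖y‖) := by
        rw [← Real.sqrt_mul (by positivity)]
        apply Real.sqrt_le_sqrt
        have h1 : 0 ≤ 1 / h := by positivity
        have := norm_nonneg y
        have e : (1 + 1 / h) * (1 + ‖y‖) = 1 + ‖y‖ / h + ‖y‖ + 1 / h := by ring
        linarith
      calc 2 ^ n * (14 * Real.sqrt (1 + ‖y‖ / h) * (3 ^ n * K)) * l ^ n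
          ≤ 2 ^ n * (14 * (Real.sqrt (1 + 1 / h) * Real.sqrt (1 + ‖y‖)) * (3 ^ n * K)) * l ^ n := by
            gcongr
        _ = _ := by rw [hB]; ring
  calc ∫⁻ x in cube c l, ‖f x - poissonExt f x t‖ₑ
      ≤ ∫⁻ x in cube c l, ∫⁻ y, ENNReal.ofReal (poissonHK n t y) * ‖f x - f (x - y)‖ₑ := by
        gcongr with x
        exact mink1 hm hf hK hosc ht x
    _ = ∫⁻ y, ENNReal.ofReal (poissonHK n t y) * ∫⁻ x in cube c l, ‖f x - f (x - y)‖ₑ := by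
        rw [lintegral_lintegral_swap]
        · congr 1; ext y
          rw [lintegral_const_mul' _ _ ENNReal.ofReal_ne_top]
        · apply Measurable.aemeasurable
          simp only [Function.uncurry_def]
          fun_prop
    _ ≤ ∫⁻ y, (ENNReal.ofReal (poissonHK n t y) * ENNReal.ofReal (2 ^ n * (2 * 3 ^ n * ε) * l ^ n) +
          {y : EuclideanSpace ℝ (Fin n) | h < ‖y‖}.indicator
          (fun y => ENNReal.ofReal (B * l ^ n) *
            ENNReal.ofReal (poissonHK n t y * Real.sqrt (1 + ‖y‖))) y) := by
        apply lintegral_mono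
        intro y
        dsimp only
        refine (mul_le_mul_right (hinner y) _).trans (le_of_eq ?_)
        rw [mul_add]
        congr 1
        by_cases hy : y ∈ {y : EuclideanSpace ℝ (Fin n) | h < ‖y‖}
        · rw [Set.indicator_of_mem hy, Set.indicator_of_mem hy,
            ENNReal.ofReal_mul (p := poissonHK n t y) (poisson_nonneg ht y)]
          ring
        · rw [Set.indicator_of_notMem hy, Set.indicator_of_notMem hy, mul_zero]
    _ = ENNReal.ofReal (2 ^ n * (2 * 3 ^ n * ε) * l ^ n) + ENNReal.ofReal (B * l ^ n) *
          ∫⁻ y in {y : EuclideanSpace ℝ (Fin n) | h < ‖y‖},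
            ENNReal.ofReal (poissonHK n t y * Real.sqrt (1 + ‖y‖)) := by
        rw [lintegral_add_left (by fun_prop), lintegral_mul_const' _ _ ENNReal.ofReal_ne_top,
          poisson_mass ht, one_mul, lintegral_indicator hset,
          lintegral_const_mul' _ _ ENNReal.ofReal_ne_top]
    _ ≤ ENNReal.ofReal (2 ^ n * (2 * 3 ^ n * ε) * l ^ n) + ENNReal.ofReal (B * l ^ n) *
          ENNReal.ofReal (pc n / m ^ (n + 1) * t * JJ n) := by
        gcongr
        apply poisson_set_bound ht hm0 _ hset
        intro y hy
        have hy : h < ‖y‖ := hy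
        apply Real.le_sqrt_of_sq_le
        have : m * (1 + ‖y‖) ≤ ‖y‖ := by
          rw [hmdef, div_mul_eq_mul_div, div_le_iff₀ (by positivity)]
          nlinarith
        calc (m * (1 + ‖y‖)) ^ 2 ≤ ‖y‖ ^ 2 := by gcongr
          _ ≤ _ := by nlinarith [sq_nonneg t]
    _ = _ := by
        rw [← ENNReal.ofReal_mul (by positivity), ← ENNReal.ofReal_add (by positivity) (by positivity)]
        congr 1; ring

lemma bmoNorm_le {f : EuclideanSpace ℝ (Fin n) → ℝ} {K : ℝ} (hK : 0 ≤ K)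
    (h : ∀ c l, 0 < l → cubeOsc f c l ≤ K) : bmoNorm f ≤ K :=
  csInf_le ⟨0, fun _ hx => hx.1⟩ ⟨hK, h⟩

lemma bmoNorm_nonneg (f : EuclideanSpace ℝ (Fin n) → ℝ) : 0 ≤ bmoNorm f :=
  Real.sInf_nonneg fun _ hx => hx.1

lemma forward {f : EuclideanSpace ℝ (Fin n) → ℝ} (hm : Measurable f)
    (hf : LocallyIntegrable f) {K : ℝ} (hK : 0 ≤ K)
    (hosc : ∀ c l, 0 < l → cubeOsc f c l ≤ K)
    (hv : ∀ ε > (0 : ℝ), ∃ δ > (0 : ℝ), ∀ c l, 0 < l → l ≤ δ → cubeOsc f c l ≤ ε) :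
    Tendsto (fun t : ℝ => bmoNorm (fun x => f x - poissonExt f x t))
        (nhdsWithin 0 (Set.Ioi 0)) (nhds 0) := by
  rw [Metric.tendsto_nhds]
  intro η hη
  set M : ℝ := 2 * (2 ^ n * (2 * 3 ^ n)) + 6 with hM
  have hM0 : 0 < M := by positivity
  set ε : ℝ := η / (2 * M) with hεd
  have hε : 0 < ε := by positivity
  obtain ⟨δ, hδ, hsm⟩ := hv ε hε
  set h := δ / 3 with hhd
  have hh : 0 < h := by positivity
  obtain ⟨A, hA, hL⟩ := large_cubes hm hf hK hosc hh hε.le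
    (fun c => hsm c (3 * h) (by positivity) (by rw [hhd]; linarith))
  have hlim : Tendsto (fun t : ℝ => A * t) (nhdsWithin 0 (Ioi 0)) (nhds 0) := by
    have : Continuous (fun t : ℝ => A * t) := by fun_prop
    simpa using (this.tendsto 0).mono_left nhdsWithin_le_nhds
  filter_upwards [hlim.eventually (gt_mem_nhds hε), self_mem_nhdsWithin] with t htA ht
  have ht : 0 < t := ht
  have hum := ext_meas hm t
  have key : bmoNorm (fun x => f x - poissonExt f x t) ≤ M * ε := by
    apply bmoNorm_le (by positivity)
    intro c l hl
    apply osc_le_of_dosc (hm.sub hum) hl (by positivity)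
    have hpos : 0 < l ^ n := by positivity
    rcases le_total h l with hc | hc
    · refine (dosc_le_lint (hm.sub hum) hl 0).trans ?_
      simp only [sub_zero]
      refine (mul_le_mul_right (hL t ht c l hc) _).trans ?_
      rw [show (2 : ℝ≥0∞) = ENNReal.ofReal 2 by simp, ← ENNReal.ofReal_mul (by norm_num),
        ← ENNReal.ofReal_mul (by positivity)]
      apply ENNReal.ofReal_le_ofReal
      calc 2 * l ^ n * ((2 ^ n * (2 * 3 ^ n * ε) + A * t) * l ^ n)
          ≤ 2 * l ^ n * ((2 ^ n * (2 * 3 ^ n * ε) + ε) * l ^ n) := by gcongr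
        _ = (2 * (2 ^ n * (2 * 3 ^ n)) + 2) * ε * l ^ n * l ^ n := by ring
        _ ≤ _ := by rw [hM]; gcongr; norm_num
    · have hle : l ≤ δ := by linarith
      have h1 := dosc_le_of_osc hm hl (intOn_cube hf c hl) (hsm c l hl hle)
      have h2 := dosc_ext hm hf hK hosc ht hl (fun c => hsm c l hl hle) c
      have h3 := dosc_add hm hum.neg c l
      have h4 := dosc_neg (f := fun x => poissonExt f x t) c l
      simp only [Pi.neg_apply, ← sub_eq_add_neg] at h3
      refine h3.trans ?_
      have h5 : dosc (-fun x => poissonExt f x t) c l = dosc (fun x => poissonExt f x t) c l := h4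
      rw [h5]
      refine (add_le_add h1 h2).trans ?_
      rw [← ENNReal.ofReal_add (by positivity) (by positivity)]
      apply ENNReal.ofReal_le_ofReal
      rw [← add_mul, ← add_mul]
      gcongr
      rw [hM]
      have : 0 ≤ 2 * (2 ^ n * (2 * 3 ^ n)) * ε := by positivity
      nlinarith
  rw [Real.dist_eq, sub_zero, abs_of_nonneg (bmoNorm_nonneg _)]
  have : M * ε = η / 2 := by rw [hεd]; field_simp
  linarith

lemma backward {f : EuclideanSpace ℝ (Fin n) → ℝ} (hm : Measurable f)
    (hf : LocallyIntegrable f) {K : ℝ} (hK : 0 ≤ K)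
    (hosc : ∀ c l, 0 < l → cubeOsc f c l ≤ K)
    (hv : Tendsto (fun t : ℝ => bmoNorm (fun x => f x - poissonExt f x t))
        (nhdsWithin 0 (Set.Ioi 0)) (nhds 0)) :
    ∀ ε > (0 : ℝ), ∃ δ > (0 : ℝ), ∀ c l, 0 < l → l ≤ δ → cubeOsc f c l ≤ ε := by
  intro ε hε
  obtain ⟨t, ht1, ht⟩ := ((hv.eventually (gt_mem_nhds (show 0 < ε / 4 by positivity))).and
    self_mem_nhdsWithin).exists
  have ht : 0 < t := ht
  have hum := ext_meas hm t
  have hsub : ∀ c l, dosc (fun x => f x - poissonExt f x t) c l ≤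
      dosc f c l + dosc (fun x => poissonExt f x t) c l := by
    intro c l
    have h3 := dosc_add hm hum.neg c l
    have h4 := dosc_neg (f := fun x => poissonExt f x t) c l
    have h5 : dosc (-fun x => poissonExt f x t) c l = dosc (fun x => poissonExt f x t) c l := h4
    simp only [Pi.neg_apply, ← sub_eq_add_neg] at h3
    rwa [h5] at h3
  have hne : {C : ℝ | 0 ≤ C ∧ ∀ c l, 0 < l →
      cubeOsc (fun x => f x - poissonExt f x t) c l ≤ C}.Nonempty := by
    refine ⟨4 * K, by positivity, fun c l hl => ?_⟩
    apply osc_le_of_dosc (hm.sub hum) hl (by positivity)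
    refine (hsub c l).trans ((add_le_add (dosc_le_of_osc hm hl (intOn_cube hf c hl) (hosc c l hl))
      (dosc_ext hm hf hK hosc ht hl (fun c => hosc c l hl) c)).trans ?_)
    rw [← ENNReal.ofReal_add (by positivity) (by positivity)]
    apply ENNReal.ofReal_le_ofReal
    apply le_of_eq; ring
  obtain ⟨C, ⟨hC0, hC⟩, hCε⟩ := exists_lt_of_csInf_lt hne ht1
  obtain ⟨δ, hδ, hu⟩ := ext_unif hm hf hK hosc ht (show 0 < ε / 4 by positivity)
  have hcont := ext_cont hm hf hK hosc ht
  refine ⟨δ / (n + 1), by positivity, fun c l hl hlδ => ?_⟩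
  apply osc_le_of_dosc hm hl hε.le
  have h1 := dosc_le_of_osc (hm.sub hum) hl
    ((intOn_cube hf c hl).sub (intOn_cube hcont.locallyIntegrable c hl)) (hC c l hl)
  have h2 : dosc (fun x => poissonExt f x t) c l ≤ ENNReal.ofReal (ε / 4 * l ^ n * l ^ n) := by
    calc _ ≤ ∫⁻ x in cube c l, ∫⁻ z in cube c l, ENNReal.ofReal (ε / 4) := by
          unfold dosc
          apply setLIntegral_mono' (measurableSet_cube _ _)
          intro x hx
          apply setLIntegral_mono' (measurableSet_cube _ _)
          intro z hz
          rw [Real.enorm_eq_ofReal_abs]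
          apply ENNReal.ofReal_le_ofReal
          apply hu
          refine (norm_le_of_coord _ hl.le fun i => ?_).trans (b := n * l) ?_
          · have h1 := hx i
            have h2 := hz i
            simp only [Set.mem_Ioo] at h1 h2
            rw [PiLp.sub_apply, abs_le]; constructor <;> linarith
          · rw [le_div_iff₀ (by positivity)] at hlδ
            nlinarith
      _ = _ := by
          rw [setLIntegral_const, setLIntegral_const, volume_cube c hl,
            ← ENNReal.ofReal_mul (by positivity), ← ENNReal.ofReal_mul (by positivity)]
  have h3 := dosc_add (hm.sub hum) hum c l
  simp only [Pi.sub_apply, sub_add_cancel] at h3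
  refine h3.trans ((add_le_add h1 h2).trans ?_)
  rw [← ENNReal.ofReal_add (by positivity) (by positivity)]
  apply ENNReal.ofReal_le_ofReal
  rw [← add_mul, ← add_mul]
  gcongr
  linarith

lemma cubeOsc_congr {f g : EuclideanSpace ℝ (Fin n) → ℝ} (h : f =ᵐ[volume] g)
    (c : EuclideanSpace ℝ (Fin n)) (l : ℝ) : cubeOsc f c l = cubeOsc g c l := by
  have h' := ae_restrict_of_ae (s := cube c l) h
  have e : cubeAvg f c l = cubeAvg g c l := by
    unfold cubeAvg; rw [integral_congr_ae h']
  unfold cubeOsc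
  rw [e]
  congr 1
  apply integral_congr_ae
  filter_upwards [h'] with x hx
  rw [hx]

end helpers

/-- For `φ ∈ BMO(ℝⁿ)`: `φ ∈ VMO(ℝⁿ)` iff `‖φ - φ(·,t)‖_* → 0` as `t → 0⁺`, where
`φ(x,t)` is the Poisson extension of `φ`. -/
theorem vmo_iff_poisson_approx {n : ℕ} (φ : EuclideanSpace ℝ (Fin n) → ℝ) (hφ : IsBMO φ) :
    IsVMO φ ↔
      Tendsto (fun t : ℝ => bmoNorm (fun x => φ x - poissonExt φ x t))
        (nhdsWithin 0 (Set.Ioi 0)) (nhds 0) := by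
  obtain ⟨hloc, C, hC⟩ := id hφ
  have hsm := hloc.aestronglyMeasurable
  set g := hsm.mk φ with hg
  have hm : Measurable g := hsm.stronglyMeasurable_mk.measurable
  have hae : φ =ᵐ[volume] g := hsm.ae_eq_mk
  have hgl : LocallyIntegrable g := by
    intro x
    exact (hloc x).congr hae
  have hosc : ∀ c l, 0 < l → cubeOsc g c l ≤ max C 0 := fun c l hl => by
    rw [← cubeOsc_congr hae]; exact (hC c l hl).trans (le_max_left _ _)
  have hext : ∀ x t, poissonExt φ x t = poissonExt g x t := by
    intro x t
    unfold poissonExt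
    apply integral_congr_ae
    filter_upwards [hae] with y hy
    rw [hy]
  have hnorm : ∀ t, bmoNorm (fun x => φ x - poissonExt φ x t) =
      bmoNorm (fun x => g x - poissonExt g x t) := by
    intro t
    have : (fun x => φ x - poissonExt φ x t) =ᵐ[volume] (fun x => g x - poissonExt g x t) := by
      filter_upwards [hae] with y hy
      rw [hy, hext]
    unfold bmoNorm
    simp_rw [cubeOsc_congr this]
  simp_rw [hnorm]
  constructor
  · rintro ⟨_, hv⟩
    apply forward hm hgl (le_max_right C 0) hosc
    simpa only [cubeOsc_congr hae] using hv
  · intro h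
    refine ⟨hφ, ?_⟩
    have := backward hm hgl (le_max_right C 0) hosc h
    simpa only [cubeOsc_congr hae] using this
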